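/- arXiv:1406.6429 — 4 statements merged into one kernel-verified Lean document; each statement's English description precedes it below -/
import Mathlib

section
/- Let m ≥ 1, n ≥ 2, and for 1 ≤ i ≤ m let f_i(x) = xᵀA_i x + c_iᵀx + d_i be quadratic functions on ℝⁿ with f₁(x) = ‖x‖² − 1 (A₁ = I, c₁ = 0, d₁ = −1), and let U_i > 0 be reals for 2 ≤ i ≤ m. Let 0 ≤ δ < 1 and suppose ẑ = (v̂₀, x̂, ŝ₁, …, ŝ_m, ŵ₂, …, ŵ_m) satisfies |x̂ᵀA_i x̂ + v̂₀ c_iᵀx̂ + d_i v̂₀² + ŝ_i²| ≤ δ for all 1 ≤ i ≤ m, |(ŝ_i² + ŵ_i²)/U_i − v̂₀²| ≤ δ for all 2 ≤ i ≤ m, and additionally |‖x̂‖² + ŝ₁² + Σ_{i=2}^m (ŝ_i² + ŵ_i²)/U_i + v̂₀² − (m+1)| ≤ δ. Then 1 − δ ≤ v̂₀² ≤ 1 + δ. -/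
open Matrix Finset

/-- Lemma `equiv0`(ii) of the paper: a `δ`-feasible point for the whole system (sys2)
satisfies `1 - δ ≤ v₀² ≤ 1 + δ`. -/
theorem stmt_1 (n m : ℕ) [NeZero m] (hn : 2 ≤ n)
    (A : Fin m → Matrix (Fin n) (Fin n) ℝ)
    (c : Fin m → (Fin n → ℝ)) (d : Fin m → ℝ)
    (hAsym : ∀ i, (A i).IsSymm)
    (hA1 : A 0 = 1) (hc1 : c 0 = 0) (hd1 : d 0 = -1)
    (U : Fin m → ℝ) (hU : ∀ i, i ≠ 0 → 0 < U i)
    (δ : ℝ) (hδ0 : 0 ≤ δ) (hδ1 : δ < 1)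
    (v0 : ℝ) (x : Fin n → ℝ) (s : Fin m → ℝ) (w : Fin m → ℝ)
    (h1 : ∀ i, |x ⬝ᵥ (A i).mulVec x + v0 * (c i ⬝ᵥ x) + d i * v0 ^ 2 + s i ^ 2| ≤ δ)
    (h2 : ∀ i, i ≠ 0 → |(s i ^ 2 + w i ^ 2) / U i - v0 ^ 2| ≤ δ)
    (h3 : |(∑ j, x j ^ 2) + s 0 ^ 2 + (∑ i ∈ univ.erase 0, (s i ^ 2 + w i ^ 2) / U i)
            + v0 ^ 2 - (m + 1)| ≤ δ) :
    1 - δ ≤ v0 ^ 2 ∧ v0 ^ 2 ≤ 1 + δ := by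
  have hx : x ⬝ᵥ (A 0).mulVec x = ∑ j, x j ^ 2 := by
    rw [hA1, Matrix.one_mulVec]
    simp [dotProduct, pow_two]
  have h10 := h1 0
  rw [hx, hc1, hd1, zero_dotProduct, abs_le] at h10
  rw [abs_le] at h3
  have hm : 1 ≤ m := Nat.one_le_iff_ne_zero.mpr (NeZero.ne m)
  have hcard : (((univ : Finset (Fin m)).erase 0).card : ℝ) = m - 1 := by
    rw [Finset.card_erase_of_mem (mem_univ _), Finset.card_univ, Fintype.card_fin]
    push_cast [hm]
    ring
  have hup : (∑ i ∈ univ.erase 0, (s i ^ 2 + w i ^ 2) / U i) ≤ (m - 1) * (v0 ^ 2 + δ) := by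
    rw [← hcard, ← nsmul_eq_mul]
    refine Finset.sum_le_card_nsmul _ _ _ fun i hi => ?_
    have := (abs_le.mp (h2 i (Finset.ne_of_mem_erase hi))).2
    linarith
  have hlo : (m - 1) * (v0 ^ 2 - δ) ≤ (∑ i ∈ univ.erase 0, (s i ^ 2 + w i ^ 2) / U i) := by
    rw [← hcard, ← nsmul_eq_mul]
    refine Finset.card_nsmul_le_sum _ _ _ fun i hi => ?_
    have := (abs_le.mp (h2 i (Finset.ne_of_mem_erase hi))).1
    linarith
  have hpos : (0 : ℝ) < m + 1 := by positivity
  constructor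
  · refine le_of_mul_le_mul_left ?_ hpos
    linarith [h10.1, h10.2, h3.1, h3.2]
  · refine le_of_mul_le_mul_left ?_ hpos
    linarith [h10.1, h10.2, h3.1, h3.2]
end

section
/- Let m ≥ 1, n ≥ 2, and for 1 ≤ i ≤ m let f_i(x) = xᵀA_i x + c_iᵀx + d_i be quadratic functions on ℝⁿ with f₁(x) = ‖x‖² − 1 (A₁ = I, c₁ = 0, d₁ = −1). For 2 ≤ i ≤ m let U_i > 0 satisfy |f_i(x)| ≤ U_i for every x ∈ ℝⁿ with ‖x‖² ≤ 2. Let 0 ≤ ε < 1/2 and suppose x̃ ∈ ℝⁿ satisfies f_i(x̃) ≤ ε for all 1 ≤ i ≤ m. Define ṽ₀ = 1, s̃_i = √(max{0, −f_i(x̃)}) for 1 ≤ i ≤ m, and w̃_i = √(U_i − s̃_i²) for 2 ≤ i ≤ m (the value under the radical being nonnegative). Then the point (ṽ₀, x̃, s̃₁, …, s̃_m, w̃₂, …, w̃_m) is mε-feasible for system (sys2), i.e. |x̃ᵀA_i x̃ + ṽ₀ c_iᵀx̃ + d_i ṽ₀² + s̃_i²| ≤ mε for 1 ≤ i ≤ m,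 |(s̃_i² + w̃_i²)/U_i − ṽ₀²| ≤ mε for 2 ≤ i ≤ m, and |‖x̃‖² + s̃₁² + Σ_{i=2}^m (s̃_i² + w̃_i²)/U_i + ṽ₀² − (m+1)| ≤ mε. -/
open Matrix Finset

/-- Lemma `equiv`(a) of the paper: from an `ε`-feasible point `x̃` of the system
`fᵢ(x) ≤ 0` one constructs an `mε`-feasible point of the system (sys2), with
`ṽ₀ = 1`, `s̃ᵢ = √(max 0 (-fᵢ(x̃)))` and `w̃ᵢ = √(Uᵢ - s̃ᵢ²)`. -/
theorem stmt_2 (n m : ℕ) [NeZero m] (hn : 2 ≤ n)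
    (A : Fin m → Matrix (Fin n) (Fin n) ℝ)
    (c : Fin m → (Fin n → ℝ)) (d : Fin m → ℝ)
    (hAsym : ∀ i, (A i).IsSymm)
    (f : Fin m → (Fin n → ℝ) → ℝ)
    (hf : ∀ i x, f i x = x ⬝ᵥ (A i).mulVec x + c i ⬝ᵥ x + d i)
    (hA1 : A 0 = 1) (hc1 : c 0 = 0) (hd1 : d 0 = -1)
    (U : Fin m → ℝ) (hU : ∀ i, i ≠ 0 → 0 < U i)
    (hUbd : ∀ i, i ≠ 0 → ∀ x : Fin n → ℝ, (∑ j, x j ^ 2) ≤ 2 → |f i x| ≤ U i)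
    (ε : ℝ) (hε0 : 0 ≤ ε) (hε1 : ε < 1 / 2)
    (x : Fin n → ℝ) (hx : ∀ i, f i x ≤ ε)
    (v0 : ℝ) (hv0 : v0 = 1)
    (s : Fin m → ℝ) (hs : ∀ i, s i = Real.sqrt (max 0 (-(f i x))))
    (w : Fin m → ℝ) (hw : ∀ i, i ≠ 0 → w i = Real.sqrt (U i - s i ^ 2)) :
    (∀ i, |x ⬝ᵥ (A i).mulVec x + v0 * (c i ⬝ᵥ x) + d i * v0 ^ 2 + s i ^ 2| ≤ m * ε) ∧
    (∀ i, i ≠ 0 → |(s i ^ 2 + w i ^ 2) / U i - v0 ^ 2| ≤ m * ε) ∧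
    |(∑ j, x j ^ 2) + s 0 ^ 2 + (∑ i ∈ univ.erase 0, (s i ^ 2 + w i ^ 2) / U i)
        + v0 ^ 2 - (m + 1)| ≤ m * ε := by
  subst hv0
  have hs2 : ∀ i, s i ^ 2 = max 0 (-(f i x)) := fun i => by
    rw [hs i, Real.sq_sqrt (le_max_left _ _)]
  have hm : (1 : ℝ) ≤ m := by
    exact_mod_cast Nat.one_le_iff_ne_zero.mpr (NeZero.ne m)
  have hme : ε ≤ m * ε := by nlinarith
  have key : ∀ i, |f i x + s i ^ 2| ≤ m * ε := fun i => by
    rw [hs2 i]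
    have := hx i
    rcases le_total 0 (-(f i x)) with h | h
    · rw [max_eq_right h, abs_le]; constructor <;> linarith
    · rw [max_eq_left h, abs_le]; constructor <;> linarith
  have hf0 : f 0 x = (∑ j, x j ^ 2) - 1 := by
    rw [hf, hA1, hc1, hd1, Matrix.one_mulVec, zero_dotProduct]
    simp only [dotProduct, pow_two]
    ring
  have hn2 : (∑ j, x j ^ 2) ≤ 2 := by
    have := hx 0
    linarith
  have h1 : ∀ i, i ≠ 0 → (s i ^ 2 + w i ^ 2) / U i = 1 := fun i hi => by
    have hb := abs_le.mp (hUbd i hi x hn2)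
    have hle : s i ^ 2 ≤ U i := by
      rw [hs2 i]
      exact max_le (hU i hi).le (by linarith [hb.1])
    rw [hw i hi, Real.sq_sqrt (by linarith), add_sub_cancel, div_self (hU i hi).ne']
  refine ⟨fun i => ?_, fun i hi => ?_, ?_⟩
  · have := key i
    rw [hf] at this
    simpa using this
  · rw [h1 i hi]
    simp only [one_pow, sub_self, abs_zero]
    linarith
  · have hsum : (∑ i ∈ univ.erase (0 : Fin m), (s i ^ 2 + w i ^ 2) / U i) = (m : ℝ) - 1 := by
      rw [Finset.sum_congr rfl (fun i hi => h1 i (Finset.ne_of_mem_erase hi))]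
      have h := Finset.sum_erase_add (univ : Finset (Fin m)) (fun _ => (1 : ℝ)) (mem_univ 0)
      have h' : (∑ _i : Fin m, (1 : ℝ)) = m := by simp
      rw [h'] at h
      linarith
    have h := key 0
    rw [hf0] at h
    rw [hsum]
    convert h using 2
    ring
end

section
/- Let m ≥ 1, n ≥ 2, and for 1 ≤ i ≤ m let f_i(x) = xᵀA_i x + c_iᵀx + d_i be quadratic functions on ℝⁿ with f₁(x) = ‖x‖² − 1 (A₁ = I, c₁ = 0, d₁ = −1), and let U_i > 0 be reals for 2 ≤ i ≤ m. Let M ≥ 1 be a real number that is an upper bound on the absolute values of all coefficients of system (sys2); in particular M ≥ |(A_i)_{jk}|, M ≥ |(c_i)_j|, M ≥ |d_i| for all i, j, k, and M ≥ 1/U_i for 2 ≤ i ≤ m. Let 0 ≤ ε < 1/2 and suppose ẑ = (v̂₀, x̂, ŝ₁, …, ŝ_m, ŵ₂, …, ŵ_m) is ε-feasible for system (sys2). Then the vector sgn(v̂₀)·x̂ ∈ ℝⁿ is (2n+1)Mε-feasible for the system f_i(x) ≤ 0 (1 ≤ i ≤ m), i.e. f_i(sgn(v̂₀)·x̂) ≤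 (2n+1)Mε for all 1 ≤ i ≤ m. -/
open Matrix Finset

/-- Lemma `equiv`(b) of the paper: if `ẑ = (v̂₀, x̂, ŝ, ŵ)` is `ε`-feasible for the
system (sys2), where `M ≥ 1` bounds the absolute values of all coefficients of (sys2),
then `sgn(v̂₀) x̂` is `(2n+1)Mε`-feasible for the system `fᵢ(x) ≤ 0`, `1 ≤ i ≤ m`. -/
theorem stmt_3 (n m : ℕ) [NeZero m] (hn : 2 ≤ n)
    (A : Fin m → Matrix (Fin n) (Fin n) ℝ)
    (c : Fin m → (Fin n → ℝ)) (d : Fin m → ℝ)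
    (hAsym : ∀ i, (A i).IsSymm)
    (f : Fin m → (Fin n → ℝ) → ℝ)
    (hf : ∀ i x, f i x = x ⬝ᵥ (A i).mulVec x + c i ⬝ᵥ x + d i)
    (hA1 : A 0 = 1) (hc1 : c 0 = 0) (hd1 : d 0 = -1)
    (U : Fin m → ℝ) (hU : ∀ i, i ≠ 0 → 0 < U i)
    (M : ℝ) (hM1 : 1 ≤ M)
    (hMA : ∀ i j k, |A i j k| ≤ M) (hMc : ∀ i j, |c i j| ≤ M) (hMd : ∀ i, |d i| ≤ M)
    (hMU : ∀ i, i ≠ 0 → 1 / U i ≤ M)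
    (ε : ℝ) (hε0 : 0 ≤ ε) (hε1 : ε < 1 / 2)
    (v0 : ℝ) (x : Fin n → ℝ) (s : Fin m → ℝ) (w : Fin m → ℝ)
    (h1 : ∀ i, |x ⬝ᵥ (A i).mulVec x + v0 * (c i ⬝ᵥ x) + d i * v0 ^ 2 + s i ^ 2| ≤ ε)
    (h2 : ∀ i, i ≠ 0 → |(s i ^ 2 + w i ^ 2) / U i - v0 ^ 2| ≤ ε)
    (h3 : |(∑ j, x j ^ 2) + s 0 ^ 2 + (∑ i ∈ univ.erase 0, (s i ^ 2 + w i ^ 2) / U i)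
            + v0 ^ 2 - (m + 1)| ≤ ε) :
    ∀ i, f i ((if 0 ≤ v0 then (1 : ℝ) else -1) • x) ≤ (2 * n + 1) * M * ε := by
  have hV : |v0 ^ 2 - 1| ≤ ε := by
    have hm : 1 ≤ m := Nat.one_le_iff_ne_zero.mpr (NeZero.ne m)
    have hm' : (1 : ℝ) ≤ m := by exact_mod_cast hm
    have hcard : ((univ.erase (0 : Fin m)).card : ℝ) = m - 1 := by
      rw [card_erase_of_mem (mem_univ _), card_univ, Fintype.card_fin, Nat.cast_sub hm]
      simp
    have hup : ∑ i ∈ univ.erase (0 : Fin m), (s i ^ 2 + w i ^ 2) / U i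
        ≤ (m - 1) * (v0 ^ 2 + ε) := by
      rw [← hcard, ← nsmul_eq_mul]
      apply sum_le_card_nsmul
      intro i hi
      have := abs_le.mp (h2 i (ne_of_mem_erase hi))
      linarith [this.2]
    have hlo : (m - 1) * (v0 ^ 2 - ε)
        ≤ ∑ i ∈ univ.erase (0 : Fin m), (s i ^ 2 + w i ^ 2) / U i := by
      rw [← hcard, ← nsmul_eq_mul]
      apply card_nsmul_le_sum
      intro i hi
      have := abs_le.mp (h2 i (ne_of_mem_erase hi))
      linarith [this.1]
    have h10 := abs_le.mp (h1 0)
    have hxx : x ⬝ᵥ x = ∑ j, x j ^ 2 := by simp [dotProduct, sq]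
    simp only [hA1, hc1, hd1, one_mulVec, zero_dotProduct, hxx] at h10
    have h3' := abs_le.mp h3
    rw [abs_le]
    constructor
    · by_contra hcon
      push Not at hcon
      have : (m + 1 : ℝ) * (v0 ^ 2 - 1) < (m + 1) * (-ε) :=
        mul_lt_mul_of_pos_left hcon (by linarith)
      linarith [h10.1, h10.2, h3'.1, h3'.2]
    · by_contra hcon
      push Not at hcon
      have : (m + 1 : ℝ) * ε < (m + 1) * (v0 ^ 2 - 1) :=
        mul_lt_mul_of_pos_left hcon (by linarith)
      linarith [h10.1, h10.2, h3'.1, h3'.2]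
  have hX : ∑ j, x j ^ 2 ≤ 2 := by
    have h10 := abs_le.mp (h1 0)
    have hxx : x ⬝ᵥ x = ∑ j, x j ^ 2 := by simp [dotProduct, sq]
    simp only [hA1, hc1, hd1, one_mulVec, zero_dotProduct, hxx] at h10
    have := abs_le.mp hV
    linarith [h10.2, this.2, sq_nonneg (s 0)]
  intro i
  have hn' : (2 : ℝ) ≤ n := by exact_mod_cast hn
  have hcx : |c i ⬝ᵥ x| ≤ (2 * n - 1) * M := by
    apply abs_le_of_sq_le_sq _ (by nlinarith)
    have hcs : (c i ⬝ᵥ x) ^ 2 ≤ (∑ j, c i j ^ 2) * ∑ j, x j ^ 2 :=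
      sum_mul_sq_le_sq_mul_sq _ _ _
    have hc2 : ∑ j, c i j ^ 2 ≤ n * M ^ 2 := by
      have : ∑ j, c i j ^ 2 ≤ (univ : Finset (Fin n)).card • M ^ 2 := by
        apply sum_le_card_nsmul
        intro j _
        exact sq_le_sq.mpr ((hMc i j).trans (le_abs_self M))
      simpa using this
    have h0 : 0 ≤ ∑ j, x j ^ 2 := sum_nonneg fun j _ => sq_nonneg _
    calc (c i ⬝ᵥ x) ^ 2 ≤ _ := hcs
      _ ≤ (n * M ^ 2) * 2 := mul_le_mul hc2 hX h0 (by positivity)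
      _ = (2 * n) * M ^ 2 := by ring
      _ ≤ (2 * n - 1) ^ 2 * M ^ 2 := by
        apply mul_le_mul_of_nonneg_right _ (sq_nonneg M)
        nlinarith
      _ = _ := by ring
  have hσ : ∃ σ : ℝ, (if 0 ≤ v0 then (1 : ℝ) else -1) = σ ∧ σ * σ = 1 ∧ |σ - v0| ≤ ε := by
    refine ⟨_, rfl, ?_, ?_⟩
    · split_ifs <;> norm_num
    · have := abs_le.mp hV
      rw [abs_le]
      split_ifs with h
      · constructor <;> nlinarith [this.1, this.2]
      · push Not at h
        constructor <;> nlinarith [this.1, this.2]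
  obtain ⟨σ, hσe, hσ1, hσ2⟩ := hσ
  rw [hσe, hf]
  simp only [mulVec_smul, dotProduct_smul, smul_dotProduct, smul_eq_mul]
  rw [← mul_assoc, hσ1, one_mul]
  have ha : (σ - v0) * (c i ⬝ᵥ x) ≤ ε * ((2 * n - 1) * M) := by
    refine (le_abs_self _).trans ?_
    rw [abs_mul]
    exact mul_le_mul hσ2 hcx (abs_nonneg _) hε0
  have hb : d i * (1 - v0 ^ 2) ≤ M * ε := by
    refine (le_abs_self _).trans ?_
    rw [abs_mul, abs_sub_comm]
    exact mul_le_mul (hMd i) hV (abs_nonneg _) (by linarith)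
  have h1i := (abs_le.mp (h1 i)).2
  have hMε : ε ≤ M * ε := by nlinarith
  nlinarith [sq_nonneg (s i)]
end

section
/- Let m ≥ 1, n ≥ 2, and for 1 ≤ i ≤ m let f_i(x) = xᵀA_i x + c_iᵀx + d_i be quadratic functions on ℝⁿ with f₁(x) = ‖x‖² − 1 (A₁ = I, c₁ = 0, d₁ = −1). For 2 ≤ i ≤ m let U_i > 0 satisfy |f_i(x)| ≤ U_i for every x ∈ ℝⁿ with ‖x‖² ≤ 2. Then the system f_i(x) ≤ 0 (1 ≤ i ≤ m) has a solution x ∈ ℝⁿ if and only if system (sys2) has an exact solution, i.e. there exist v₀ ∈ ℝ, x ∈ ℝⁿ, s₁, …, s_m ∈ ℝ, w₂, …, w_m ∈ ℝ satisfying xᵀA_i x + v₀ c_iᵀx + d_i v₀² + s_i² = 0 for 1 ≤ i ≤ m, (s_i² + w_i²)/U_i − v₀² = 0 for 2 ≤ i ≤ m, and ‖x‖² + s₁² + Σ_{i=2}^m (s_i² + w_i²)/U_i + v₀² = m + 1. -/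
open Matrix Finset

/-- Corollary `approx` of the paper: the system `fᵢ(x) ≤ 0`, `1 ≤ i ≤ m`, is feasible
if and only if the corresponding system (sys2) of quadratic equations is feasible. -/
theorem stmt_4 (n m : ℕ) [NeZero m] (hn : 2 ≤ n)
    (A : Fin m → Matrix (Fin n) (Fin n) ℝ)
    (c : Fin m → (Fin n → ℝ)) (d : Fin m → ℝ)
    (hAsym : ∀ i, (A i).IsSymm)
    (f : Fin m → (Fin n → ℝ) → ℝ)
    (hf : ∀ i x, f i x = x ⬝ᵥ (A i).mulVec x + c i ⬝ᵥ x + d i)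
    (hA1 : A 0 = 1) (hc1 : c 0 = 0) (hd1 : d 0 = -1)
    (U : Fin m → ℝ) (hU : ∀ i, i ≠ 0 → 0 < U i)
    (hUbd : ∀ i, i ≠ 0 → ∀ x : Fin n → ℝ, (∑ j, x j ^ 2) ≤ 2 → |f i x| ≤ U i) :
    (∃ x : Fin n → ℝ, ∀ i, f i x ≤ 0) ↔
    (∃ (v0 : ℝ) (x : Fin n → ℝ) (s : Fin m → ℝ) (w : Fin m → ℝ),
      (∀ i, x ⬝ᵥ (A i).mulVec x + v0 * (c i ⬝ᵥ x) + d i * v0 ^ 2 + s i ^ 2 = 0) ∧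
      (∀ i, i ≠ 0 → (s i ^ 2 + w i ^ 2) / U i - v0 ^ 2 = 0) ∧
      (∑ j, x j ^ 2) + s 0 ^ 2 + (∑ i ∈ univ.erase 0, (s i ^ 2 + w i ^ 2) / U i)
        + v0 ^ 2 = m + 1) := by
  have hsq : ∀ x : Fin n → ℝ, x ⬝ᵥ (A 0).mulVec x = ∑ j, x j ^ 2 := by
    intro x
    rw [hA1, Matrix.one_mulVec]
    simp [dotProduct, sq]
  have hm : 1 ≤ m := Nat.one_le_iff_ne_zero.mpr (NeZero.ne m)
  have hsum : ∀ (g : Fin m → ℝ) (t : ℝ), (∀ i, i ≠ 0 → g i = t) →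
      ∑ i ∈ univ.erase (0 : Fin m), g i = ((m : ℝ) - 1) * t := by
    intro g t h
    rw [Finset.sum_congr rfl (fun i hi => h i (Finset.ne_of_mem_erase hi))]
    rw [Finset.sum_const, Finset.card_erase_of_mem (Finset.mem_univ _), Finset.card_univ,
      Fintype.card_fin, nsmul_eq_mul, Nat.cast_sub hm, Nat.cast_one]
  constructor
  · rintro ⟨x, hx⟩
    have h0 : (∑ j, x j ^ 2) - 1 ≤ 0 := by
      have h := hx 0
      rw [hf, hsq, hc1, hd1, zero_dotProduct] at h
      linarith
    have hs : ∀ i, Real.sqrt (-f i x) ^ 2 = -f i x := fun i =>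
      Real.sq_sqrt (by linarith [hx i])
    have hw : ∀ i, i ≠ 0 → Real.sqrt (U i + f i x) ^ 2 = U i + f i x := fun i hi =>
      Real.sq_sqrt (by
        have := (abs_le.mp (hUbd i hi x (by linarith))).1
        linarith)
    have h1 : ∀ i, i ≠ 0 →
        (Real.sqrt (-f i x) ^ 2 + Real.sqrt (U i + f i x) ^ 2) / U i = 1 := by
      intro i hi
      rw [hs, hw i hi, neg_add_cancel_comm_assoc, div_self (hU i hi).ne']
    refine ⟨1, x, fun i => Real.sqrt (-f i x), fun i => Real.sqrt (U i + f i x), ?_, ?_, ?_⟩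
    · intro i
      simp only [hs]
      rw [hf]
      ring
    · intro i hi
      simp only [h1 i hi]
      norm_num
    · rw [hsum _ 1 h1]
      simp only [hs]
      rw [hf, hsq, hc1, hd1, zero_dotProduct]
      ring
  · rintro ⟨v, x, s, w, h1, h2, h3⟩
    rw [hsum _ (v ^ 2) (fun i hi => by linarith [h2 i hi])] at h3
    have h0 := h1 0
    rw [hsq, hc1, hd1, zero_dotProduct] at h0
    have hv : v ^ 2 = 1 := by
      have hmp : ((m : ℝ) + 1) ≠ 0 := by positivity
      apply mul_left_cancel₀ hmp
      linarith
    refine ⟨v • x, fun i => ?_⟩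
    have h := h1 i
    rw [hf, Matrix.mulVec_smul, dotProduct_smul, smul_dotProduct, dotProduct_smul]
    simp only [smul_eq_mul]
    rw [← mul_assoc, ← sq, hv]
    rw [hv] at h
    nlinarith [sq_nonneg (s i)]
end
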